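/- Let λ > 0 and β ∈ (0,1]. For every n ∈ ℕ₀ and every x ∈ ℝ, x^n = ∑_{k=0}^n ∑_{m=0}^k binom(n,k) C_m^{λ,β}(x) S(k,m) M_{λ,β}(n−k), where S(k,m) are the Stirling numbers of the second kind and M_{λ,β}(j) is the j-th moment of the fractional Poisson measure. -/

import Mathlib

open MeasureTheory Finset
open scoped ENNReal NNReal

noncomputable section

/-- The complex Mittag-Leffler function `E_β(z) = ∑ zⁿ / Γ(βn+1)`. -/
def mittagLeffler (β : ℝ) (z : ℂ) : ℂ :=
  ∑' n : ℕ, z ^ n / (Complex.Gamma ((β * n + 1 : ℝ) : ℂ))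

/-- The real Mittag-Leffler function `E_β(x) = ∑ xⁿ / Γ(βn+1)`. -/
def mittagLefflerR (β : ℝ) (x : ℝ) : ℝ :=
  ∑' n : ℕ, x ^ n / Real.Gamma (β * n + 1)

/-- The fractional Poisson measure `π_{λ,β} = ∑_k (λᵏ/k!) E_β⁽ᵏ⁾(-λ) δ_k` on `ℝ`. -/
def fracPoisson (lam β : ℝ) : Measure ℝ :=
  Measure.sum fun k : ℕ =>
    ENNReal.ofReal (lam ^ k / k.factorial * iteratedDeriv k (mittagLefflerR β) (-lam)) •
      Measure.dirac (k : ℝ)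

/-- The Poisson measure with rate `μ` on `ℝ`, `π_μ({k}) = (μᵏ/k!) e^{-μ}`. -/
def poissonMeasureR (μ : ℝ) : Measure ℝ :=
  Measure.sum fun k : ℕ =>
    ENNReal.ofReal (μ ^ k / k.factorial * Real.exp (-μ)) • Measure.dirac (k : ℝ)

/-- The generalized Appell polynomials
`C_n^{λ,β}(x) = dⁿ/dzⁿ [e^{x log(1+z)} / E_β(λz)]` at `z = 0`. -/
def genAppell (lam β : ℝ) (n : ℕ) (x : ℂ) : ℂ :=
  iteratedDeriv n
    (fun z : ℂ => Complex.exp (x * Complex.log (1 + z)) / mittagLeffler β (lam * z)) 0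

/-- The Appell polynomials `A_n^{λ,β}(x) = dⁿ/dzⁿ [e^{zx} / E_β(λ(eᶻ-1))]` at `z = 0`. -/
def appell (lam β : ℝ) (n : ℕ) (x : ℂ) : ℂ :=
  iteratedDeriv n
    (fun z : ℂ => Complex.exp (z * x) / mittagLeffler β (lam * (Complex.exp z - 1))) 0

/-- Stirling numbers of the first kind, via `(log(1+z))^k = k! ∑_{n≥k} s(n,k) zⁿ/n!`. -/
def stirlingFst (n k : ℕ) : ℝ :=
  iteratedDeriv n (fun x : ℝ => (Real.log (1 + x)) ^ k) 0 / k.factorial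

/-- Stirling numbers of the second kind, via `(eᶻ-1)^k = k! ∑_{n≥k} S(n,k) zⁿ/n!`. -/
def stirlingSnd (n k : ℕ) : ℝ :=
  iteratedDeriv n (fun x : ℝ => (Real.exp x - 1) ^ k) 0 / k.factorial

/-- The `n`-th moment of the fractional Poisson measure. -/
def fpMoment (lam β : ℝ) (n : ℕ) : ℝ := ∫ x, x ^ n ∂(fracPoisson lam β)

/-- `M̃_{λ,β}(m) = m! λᵐ / Γ(mβ+1)`. -/
def tildeM (lam β : ℝ) (m : ℕ) : ℝ := m.factorial * lam ^ m / Real.Gamma (m * β + 1)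

/-- The (partial exponential) Bell polynomials `B_{n,k}(x₁, …, x_{n-k+1})`. -/
def bellPoly (n k : ℕ) (x : ℕ → ℂ) : ℂ :=
  ∑ j ∈ (Fintype.piFinset fun _ : Fin (n - k + 1) => Finset.range (n + 1)).filter
      (fun j => (∑ i, j i) = k ∧ (∑ i, (i.1 + 1) * j i) = n),
    (n.factorial : ℂ) / (∏ i, ((j i).factorial : ℂ)) *
      ∏ i, (x (i.1 + 1) / ((i.1 + 1).factorial : ℂ)) ^ j i

/-!
The identity is the `n`-th derivative at `0` of `e^{xz} = F(eᶻ - 1) * H(z)`, where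
`F(w) = e^{x log(1+w)} / E_β(λw)` generates the generalized Appell polynomials and
`H(z) = E_β(λ(eᶻ - 1))`. Leibniz' rule gives the outer sum, the derivatives of `F(eᶻ - 1)` are
Stirling sums of those of `F`, and `H` is the moment generating function of `π_{λ,β}` by the Taylor
expansion of `E_β` at `-λ`.

That `π_{λ,β}` has the masses `(λᵏ/k!) E_β⁽ᵏ⁾(-λ)` requires these to be nonnegative, i.e. the
complete monotonicity of `x ↦ E_β(-x)` (Pollard). It holds because `n! / Γ(βn + 1)`, the `n`-th
derivative of `E_β` at `0`, is a Stieltjes moment sequence: Euler's limit for `Γ` exhibits it as the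
limit of `N^{(1-β)n} ∏_{j ≤ N} (βn + 1 + j)/(n + 1 + j)`, a product of moment sequences.
-/

open Filter Topology ProbabilityTheory

/-! ### Stieltjes moment sequences -/

/-- A sequence `m` is Stieltjes positive if the linear functional `tⁿ ↦ m n` is nonnegative on every
polynomial that is nonnegative on `[0, ∞)`; equivalently (Riesz–Haviland), if `m` is the sequence of
moments of a measure on `[0, ∞)`. Polynomials are encoded by their coefficients in degrees `< N`. -/
def StieltjesPositive (m : ℕ → ℝ) : Prop :=
  ∀ (N : ℕ) (a : ℕ → ℝ), (∀ t, 0 ≤ t → 0 ≤ ∑ n ∈ range N, a n * t ^ n) →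
    0 ≤ ∑ n ∈ range N, a n * m n

namespace StieltjesPositive

variable {m m' : ℕ → ℝ}

lemma pow {c : ℝ} (hc : 0 ≤ c) : StieltjesPositive fun n => c ^ n :=
  fun _ _ ha => ha c hc

lemma inv_succ : StieltjesPositive fun n => 1 / ((n : ℝ) + 1) := by
  intro N a ha
  have hmoment : ∑ n ∈ range N, a n * (1 / ((n : ℝ) + 1)) =
      ∫ t in (0 : ℝ)..1, ∑ n ∈ range N, a n * t ^ n := by
    rw [intervalIntegral.integral_finsetSum fun n _ =>
      (by fun_prop : Continuous fun t : ℝ => a n * t ^ n).intervalIntegrable 0 1]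
    simp [integral_pow]
  rw [hmoment]
  exact intervalIntegral.integral_nonneg zero_le_one fun t ht => ha t ht.1

lemma add (hm : StieltjesPositive m) (hm' : StieltjesPositive m') :
    StieltjesPositive fun n => m n + m' n := by
  intro N a ha
  simp only [mul_add, sum_add_distrib]
  exact add_nonneg (hm N a ha) (hm' N a ha)

lemma const_mul {c : ℝ} (hc : 0 ≤ c) (hm : StieltjesPositive m) :
    StieltjesPositive fun n => c * m n := by
  intro N a ha
  simp only [mul_left_comm _ c, ← mul_sum]
  exact mul_nonneg hc (hm N a ha)

lemma mul (hm : StieltjesPositive m) (hm' : StieltjesPositive m') :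
    StieltjesPositive fun n => m n * m' n := by
  intro N a ha
  have hscaled (t : ℝ) (ht : 0 ≤ t) : 0 ≤ ∑ n ∈ range N, a n * m' n * t ^ n := by
    have := hm' N (fun n => a n * t ^ n) fun u hu => by
      simpa only [mul_assoc, ← mul_pow] using ha (t * u) (mul_nonneg ht hu)
    simpa only [mul_right_comm] using this
  simpa only [mul_assoc, mul_comm (m' _)] using hm N _ hscaled

lemma prod {ι : Type*} (s : Finset ι) {f : ι → ℕ → ℝ}
    (hf : ∀ i ∈ s, StieltjesPositive (f i)) : StieltjesPositive fun n => ∏ i ∈ s, f i n := by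
  classical
  induction s using Finset.induction_on with
  | empty => simpa using pow zero_le_one
  | insert i s hi ih =>
    simp only [prod_insert hi]
    exact (hf i (mem_insert_self i s)).mul (ih fun j hj => hf j (mem_insert_of_mem hj))

lemma shift (hm : StieltjesPositive m) (k : ℕ) : StieltjesPositive fun n => m (n + k) := by
  induction k with
  | zero => exact hm
  | succ k ih =>
    intro N a ha
    have := ih (N + 1) (fun n => Nat.casesOn n 0 a) fun t ht => by
      simpa [sum_range_succ', pow_succ, ← mul_assoc, ← sum_mul] using mul_nonneg (ha t ht) ht
    simpa [sum_range_succ', add_right_comm _ 1 k, add_assoc] using this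

lemma of_tendsto {ι : Type*} {l : Filter ι} [l.NeBot] {f : ι → ℕ → ℝ}
    (hf : ∀ i, StieltjesPositive (f i)) (hlim : ∀ n, Tendsto (fun i => f i n) l (𝓝 (m n))) :
    StieltjesPositive m := fun N a ha =>
  ge_of_tendsto' (tendsto_finsetSum _ fun n _ => (hlim n).const_mul (a n)) fun i => hf i N a ha

end StieltjesPositive

lemma sum_range_two_mul_add_one_pow_div_factorial_nonneg (y : ℝ) (M : ℕ) :
    0 ≤ ∑ n ∈ range (2 * M + 1), y ^ n / n.factorial := by
  rcases le_or_gt 0 y with hy | hy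
  · positivity
  obtain ⟨ξ, -, hξ⟩ := taylor_mean_remainder_lagrange_iteratedDeriv (n := 2 * M) hy.ne'
    Real.contDiff_exp.contDiffOn
  have htaylor : taylorWithinEval Real.exp (2 * M) (Set.uIcc 0 y) 0 y =
      ∑ n ∈ range (2 * M + 1), y ^ n / n.factorial := by
    rw [taylor_within_apply]
    refine sum_congr rfl fun n _ => ?_
    rw [iteratedDerivWithin_eq_iteratedDeriv (uniqueDiffOn_uIcc hy.ne')
      Real.contDiff_exp.contDiffAt Set.left_mem_uIcc, iteratedDeriv_eq_iterate,
      Real.iter_deriv_exp, Real.exp_zero, sub_zero, smul_eq_mul, mul_one, inv_mul_eq_div]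
  have hremainder : Real.exp ξ * y ^ (2 * M + 1) / (2 * M + 1).factorial ≤ 0 :=
    div_nonpos_of_nonpos_of_nonneg
      (mul_nonpos_of_nonneg_of_nonpos (Real.exp_pos ξ).le (Odd.pow_nonpos ⟨M, rfl⟩ hy.le))
      (Nat.cast_nonneg _)
  rw [htaylor, sub_zero, iteratedDeriv_eq_iterate, Real.iter_deriv_exp] at hξ
  linarith [Real.exp_pos y]

/-- The exponential generating function of a moment sequence integrates `t ↦ e^{xt}`, whose Taylor
polynomials of even degree are nonnegative. -/
lemma StieltjesPositive.hasSum_nonneg {m : ℕ → ℝ} (hm : StieltjesPositive m) {x s : ℝ}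
    (hs : HasSum (fun n => m n * x ^ n / n.factorial) s) : 0 ≤ s := by
  have hodd : Tendsto (fun M : ℕ => 2 * M + 1) atTop atTop :=
    tendsto_atTop_mono (fun M => (by lia : M ≤ 2 * M + 1)) tendsto_id
  refine ge_of_tendsto' (hs.tendsto_sum_nat.comp hodd) fun M => ?_
  have := hm (2 * M + 1) (fun n => x ^ n / n.factorial) fun t _ => by
    simpa only [mul_pow, div_mul_eq_mul_div] using
      sum_range_two_mul_add_one_pow_div_factorial_nonneg (x * t) M
  simpa only [Function.comp_apply, mul_comm (m _), div_mul_eq_mul_div] using this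

/-! ### Power series and iterated derivatives -/

section PowerSeries

variable {𝕜 : Type*} [NontriviallyNormedField 𝕜] {f : 𝕜 → 𝕜} {a : ℕ → 𝕜}

lemma hasFPowerSeriesOnBall_top_of_hasSum (h : ∀ z, HasSum (fun n => a n * z ^ n) (f z)) :
    HasFPowerSeriesOnBall f (FormalMultilinearSeries.ofScalars 𝕜 a) 0 ⊤ where
  r_le := by
    refine (ENNReal.eq_top_of_forall_nnreal_le fun r => ?_).ge
    obtain ⟨z, hz⟩ := NormedField.exists_lt_norm 𝕜 r
    refine FormalMultilinearSeries.le_radius_of_tendsto _ (l := 0) ?_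
    refine squeeze_zero (fun n => by positivity) (fun n => ?_)
      (tendsto_zero_iff_norm_tendsto_zero.1 (h z).summable.tendsto_atTop_zero)
    rw [FormalMultilinearSeries.ofScalars_norm, norm_mul, norm_pow]
    gcongr
  r_pos := by simp
  hasSum {z} _ := by
    simpa [FormalMultilinearSeries.ofScalars_apply_eq, mul_comm] using h z

lemma iteratedDeriv_zero_of_hasSum [CompleteSpace 𝕜] [CharZero 𝕜]
    (h : ∀ z, HasSum (fun n => a n * z ^ n) (f z)) (n : ℕ) :
    iteratedDeriv n f 0 = n.factorial * a n := by
  have hseries := (hasFPowerSeriesOnBall_top_of_hasSum h).hasFPowerSeriesAt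
  have hcoeff := FormalMultilinearSeries.ofScalars_series_injective 𝕜 𝕜
    (hseries.eq_formalMultilinearSeries hseries.analyticAt.hasFPowerSeriesAt)
  rw [congrFun hcoeff n, mul_div_cancel₀ _ (Nat.cast_ne_zero.2 n.factorial_ne_zero)]

end PowerSeries

lemma differentiable_of_hasSum {f : ℂ → ℂ} {a : ℕ → ℂ}
    (h : ∀ z, HasSum (fun n => a n * z ^ n) (f z)) : Differentiable ℂ f := by
  have := (hasFPowerSeriesOnBall_top_of_hasSum h).differentiableOn
  rwa [Metric.eball_top, differentiableOn_univ] at this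

section Entire

variable {f : ℂ → ℂ} {g : ℝ → ℝ}

lemma hasSum_iteratedDeriv_of_entire (hf : Differentiable ℂ f) (k : ℕ) (z : ℂ) :
    HasSum (fun n => iteratedDeriv (n + k) f 0 * z ^ n / n.factorial) (iteratedDeriv k f z) := by
  have htaylor := Complex.hasSum_taylorSeries_of_entire
    (hf.contDiff.differentiable_iteratedDeriv' k) 0 z
  refine htaylor.congr_fun fun n => ?_
  simp only [iteratedDeriv_eq_iterate, Function.iterate_add_apply, smul_eq_mul, sub_zero]
  ring

lemma iteratedDeriv_ofReal_of_entire (hf : Differentiable ℂ f) (hfg : ∀ x : ℝ, f x = g x)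
    (k : ℕ) (x : ℝ) : iteratedDeriv k f x = (iteratedDeriv k g x : ℝ) := by
  induction k generalizing x with
  | zero => simpa using hfg x
  | succ k ih =>
    rw [iteratedDeriv_succ, iteratedDeriv_succ]
    have hcomplex : HasDerivAt (iteratedDeriv k f) (deriv (iteratedDeriv k f) x) (x : ℂ) :=
      (hf.contDiff.differentiable_iteratedDeriv' k _).hasDerivAt
    have hreal : HasDerivAt (iteratedDeriv k g) (deriv (iteratedDeriv k f) x).re x := by
      simpa only [ih, Complex.ofReal_re] using hcomplex.real_of_complex
    have hreal' := hreal.ofReal_comp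
    simp only [← ih] at hreal'
    rw [hreal.deriv]
    exact hcomplex.comp_ofReal.unique hreal'

lemma iteratedDeriv_nonneg_of_stieltjesPositive (hf : Differentiable ℂ f)
    (hfg : ∀ x : ℝ, f x = g x) (hg : StieltjesPositive fun n => iteratedDeriv n g 0)
    (k : ℕ) (x : ℝ) : 0 ≤ iteratedDeriv k g x := by
  refine (hg.shift k).hasSum_nonneg (x := x) (Complex.hasSum_ofReal.1 ?_)
  have hderiv (j : ℕ) : iteratedDeriv j f 0 = (iteratedDeriv j g 0 : ℝ) := by
    simpa using iteratedDeriv_ofReal_of_entire hf hfg j 0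
  simpa [hderiv, iteratedDeriv_ofReal_of_entire hf hfg] using
    hasSum_iteratedDeriv_of_entire hf k x

end Entire

/-! ### The Mittag-Leffler function -/

lemma rpow_mul_exp_neg_le_Gamma_add_one {A s : ℝ} (hA : 0 ≤ A) (hs : 0 ≤ s) :
    A ^ s * Real.exp (-A) ≤ Real.Gamma (s + 1) := by
  have hint : IntegrableOn (fun x => Real.exp (-x) * x ^ s) (Set.Ioi 0) := by
    simpa using Real.GammaIntegral_convergent (s := s + 1) (by positivity)
  have hsub : Set.Ioi A ⊆ Set.Ioi 0 := Set.Ioi_subset_Ioi hA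
  calc A ^ s * Real.exp (-A) = ∫ x in Set.Ioi A, Real.exp (-x) * A ^ s := by
        rw [integral_mul_const, integral_exp_neg_Ioi, mul_comm]
    _ ≤ ∫ x in Set.Ioi A, Real.exp (-x) * x ^ s := by
        refine setIntegral_mono_on ((integrableOn_exp_neg_Ioi A).mul_const _)
          (hint.mono_set hsub) measurableSet_Ioi fun x hx => ?_
        gcongr
        exact le_of_lt hx
    _ ≤ ∫ x in Set.Ioi 0, Real.exp (-x) * x ^ s := by
        refine setIntegral_mono_set hint ?_ hsub.eventuallyLE
        filter_upwards [self_mem_ae_restrict measurableSet_Ioi] with x hx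
        have : 0 < x := hx
        positivity
    _ = Real.Gamma (s + 1) := by
        rw [Real.Gamma_eq_integral (by positivity), add_sub_cancel_right]

/-- `Γ(s + 1) ≥ A ^ s * e^{-A}` with `A ^ β = 2r` bounds the terms by a geometric series. -/
lemma summable_pow_div_Gamma {β : ℝ} (hβ : 0 < β) {r : ℝ} (hr : 0 ≤ r) :
    Summable fun n : ℕ => r ^ n / Real.Gamma (β * n + 1) := by
  set A : ℝ := (2 * r) ^ β⁻¹
  have hA_pow (n : ℕ) : A ^ (β * n) = 2 ^ n * r ^ n := by
    rw [Real.rpow_mul (by positivity), Real.rpow_inv_rpow (by positivity) hβ.ne',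
      Real.rpow_natCast, mul_pow]
  refine .of_nonneg_of_le (fun n => ?_) (fun n => ?_)
    (summable_geometric_two.mul_left (Real.exp A))
  · have := Real.Gamma_pos_of_pos (by positivity : 0 < β * n + 1)
    positivity
  · have hGamma := rpow_mul_exp_neg_le_Gamma_add_one (by positivity : 0 ≤ A)
      (by positivity : 0 ≤ β * n)
    rw [div_le_iff₀ (Real.Gamma_pos_of_pos (by positivity))]
    calc r ^ n = Real.exp A * (1 / 2) ^ n * (A ^ (β * n) * Real.exp (-A)) := by
          rw [hA_pow, Real.exp_neg, one_div, inv_pow]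
          field_simp
      _ ≤ Real.exp A * (1 / 2) ^ n * Real.Gamma (β * n + 1) := by gcongr

lemma hasSum_mittagLeffler {β : ℝ} (hβ : 0 < β) (z : ℂ) :
    HasSum (fun n : ℕ => (((Real.Gamma (β * n + 1))⁻¹ : ℝ) : ℂ) * z ^ n)
      (mittagLeffler β z) := by
  have hterm (n : ℕ) : z ^ n / Complex.Gamma ((β * n + 1 : ℝ) : ℂ) =
      (((Real.Gamma (β * n + 1))⁻¹ : ℝ) : ℂ) * z ^ n := by
    rw [Complex.Gamma_ofReal, Complex.ofReal_inv, div_eq_inv_mul]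
  have hsummable : Summable fun n : ℕ => (((Real.Gamma (β * n + 1))⁻¹ : ℝ) : ℂ) * z ^ n := by
    refine .of_norm ((summable_pow_div_Gamma hβ (norm_nonneg z)).congr fun n => ?_)
    have := Real.Gamma_pos_of_pos (by positivity : 0 < β * n + 1)
    rw [norm_mul, norm_pow, Complex.norm_of_nonneg (by positivity), div_eq_inv_mul]
  simpa only [mittagLeffler, hterm] using hsummable.hasSum

lemma mittagLeffler_ofReal (β x : ℝ) : mittagLeffler β x = mittagLefflerR β x := by
  simp only [mittagLeffler, mittagLefflerR, Complex.Gamma_ofReal]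
  push_cast
  rfl

lemma mittagLeffler_zero (β : ℝ) : mittagLeffler β 0 = 1 := by
  rw [mittagLeffler, tsum_eq_single 0 fun n hn => by simp [hn]]
  simp

lemma differentiable_mittagLeffler {β : ℝ} (hβ : 0 < β) : Differentiable ℂ (mittagLeffler β) :=
  differentiable_of_hasSum (hasSum_mittagLeffler hβ)

lemma iteratedDeriv_mittagLeffler_ofReal {β : ℝ} (hβ : 0 < β) (k : ℕ) (x : ℝ) :
    iteratedDeriv k (mittagLeffler β) x = (iteratedDeriv k (mittagLefflerR β) x : ℝ) :=
  iteratedDeriv_ofReal_of_entire (differentiable_mittagLeffler hβ) (mittagLeffler_ofReal β) k x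

lemma iteratedDeriv_mittagLefflerR_zero {β : ℝ} (hβ : 0 < β) (n : ℕ) :
    iteratedDeriv n (mittagLefflerR β) 0 = n.factorial / Real.Gamma (β * n + 1) := by
  have hcomplex := iteratedDeriv_zero_of_hasSum (hasSum_mittagLeffler hβ) n
  have hreal := iteratedDeriv_mittagLeffler_ofReal hβ n 0
  rw [Complex.ofReal_zero, hcomplex] at hreal
  rw [div_eq_mul_inv]
  exact_mod_cast hreal.symm

/-- Each factor is the mixture `β * 1 + (1 - β) * ((j + 1) / (n + 1 + j))` of moment sequences. -/
lemma stieltjesPositive_div_add {β : ℝ} (hβ0 : 0 ≤ β) (hβ1 : β ≤ 1) (j : ℕ) :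
    StieltjesPositive fun n => (β * n + 1 + j) / ((n : ℝ) + 1 + j) := by
  have hmixture := (StieltjesPositive.pow zero_le_one |>.const_mul hβ0).add
    (StieltjesPositive.inv_succ.shift j |>.const_mul
      (mul_nonneg (sub_nonneg.2 hβ1) (by positivity : (0 : ℝ) ≤ j + 1)))
  convert hmixture using 2 with n
  push_cast
  field_simp
  ring

lemma tendsto_factorial_div_Gamma {β : ℝ} (hβ : 0 ≤ β) (n : ℕ) :
    Tendsto (fun N : ℕ => ((N : ℝ) ^ (1 - β)) ^ n *
        ∏ j ∈ range (N + 1), (β * n + 1 + j) / ((n : ℝ) + 1 + j))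
      atTop (𝓝 (n.factorial / Real.Gamma (β * n + 1))) := by
  rw [← Real.Gamma_nat_eq_factorial]
  refine ((Real.GammaSeq_tendsto_Gamma (n + 1)).div (Real.GammaSeq_tendsto_Gamma (β * n + 1))
    (Real.Gamma_pos_of_pos (by positivity)).ne').congr' ?_
  filter_upwards [eventually_gt_atTop 0] with N hN
  have hN' : (0 : ℝ) < N := Nat.cast_pos.2 hN
  have hpow : (N : ℝ) ^ ((n : ℝ) + 1) = ((N : ℝ) ^ (1 - β)) ^ n * (N : ℝ) ^ (β * n + 1) := by
    rw [← Real.rpow_natCast, ← Real.rpow_mul hN'.le, ← Real.rpow_add hN']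
    ring_nf
  have hprod : ∏ j ∈ range (N + 1), (β * n + 1 + j) ≠ 0 :=
    prod_ne_zero_iff.2 fun j _ => by positivity
  have hprod' : ∏ j ∈ range (N + 1), ((n : ℝ) + 1 + j) ≠ 0 :=
    prod_ne_zero_iff.2 fun j _ => by positivity
  simp only [Pi.div_apply, Real.GammaSeq, hpow, prod_div_distrib]
  field_simp

lemma stieltjesPositive_factorial_div_Gamma {β : ℝ} (hβ0 : 0 ≤ β) (hβ1 : β ≤ 1) :
    StieltjesPositive fun n => n.factorial / Real.Gamma (β * n + 1) :=
  .of_tendsto (fun N : ℕ => (StieltjesPositive.pow (Real.rpow_nonneg N.cast_nonneg (1 - β))).mul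
    (.prod (range (N + 1)) fun j _ => stieltjesPositive_div_add hβ0 hβ1 j))
    (tendsto_factorial_div_Gamma hβ0)

lemma iteratedDeriv_mittagLefflerR_nonneg {β : ℝ} (hβ0 : 0 < β) (hβ1 : β ≤ 1) (k : ℕ) (x : ℝ) :
    0 ≤ iteratedDeriv k (mittagLefflerR β) x :=
  iteratedDeriv_nonneg_of_stieltjesPositive (differentiable_mittagLeffler hβ0)
    (mittagLeffler_ofReal β) (by simpa only [iteratedDeriv_mittagLefflerR_zero hβ0] using
      stieltjesPositive_factorial_div_Gamma hβ0.le hβ1) k x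

/-! ### Moments of the fractional Poisson measure -/

section DiscreteMeasure

variable {w : ℕ → ℝ} {G : ℂ → ℂ}

lemma integrableExpSet_sum_dirac (hw : ∀ k, 0 ≤ w k)
    (hG : ∀ u, HasSum (fun k => (w k : ℂ) * u ^ k) (G u)) :
    integrableExpSet id
      (Measure.sum fun k : ℕ => ENNReal.ofReal (w k) • Measure.dirac (k : ℝ)) = Set.univ := by
  refine Set.eq_univ_of_forall fun t => integrable_sum_dirac (fun k => ENNReal.ofReal_ne_top) ?_
  refine (hG (Complex.exp t)).summable.norm.congr fun k => ?_
  rw [ENNReal.toReal_ofReal (hw k), norm_mul, Complex.norm_of_nonneg (hw k), ← Complex.exp_nat_mul,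
    Complex.norm_exp, Real.norm_of_nonneg (Real.exp_pos _).le]
  simp [mul_comm]

lemma complexMGF_sum_dirac (hw : ∀ k, 0 ≤ w k)
    (hG : ∀ u, HasSum (fun k => (w k : ℂ) * u ^ k) (G u)) (z : ℂ) :
    complexMGF id (Measure.sum fun k : ℕ => ENNReal.ofReal (w k) • Measure.dirac (k : ℝ)) z =
      G (Complex.exp z) := by
  rw [complexMGF, integral_sum_dirac fun k => ENNReal.ofReal_ne_top, ← (hG _).tsum_eq]
  refine tsum_congr fun k => ?_
  rw [ENNReal.toReal_ofReal (hw k), ← Complex.exp_nat_mul, Complex.real_smul, mul_comm (k : ℂ)]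
  simp

lemma iteratedDeriv_comp_exp_zero_eq_moment (hw : ∀ k, 0 ≤ w k)
    (hG : ∀ u, HasSum (fun k => (w k : ℂ) * u ^ k) (G u)) (n : ℕ) :
    iteratedDeriv n (fun z => G (Complex.exp z)) 0 =
      ((∫ x, x ^ n ∂(Measure.sum fun k : ℕ =>
        ENNReal.ofReal (w k) • Measure.dirac (k : ℝ)) : ℝ) : ℂ) := by
  rw [← funext (complexMGF_sum_dirac hw hG), iteratedDeriv_complexMGF
    (by simp [integrableExpSet_sum_dirac hw hG]), ← integral_complex_ofReal]
  simp

end DiscreteMeasure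

section FracPoisson

variable {lam β : ℝ}

/-- The mass `(λᵏ/k!) E_β⁽ᵏ⁾(-λ)` that the fractional Poisson measure gives to `k`, before the
truncation by `ENNReal.ofReal` in the definition of that measure. -/
def fracPoissonWeight (lam β : ℝ) (k : ℕ) : ℝ :=
  lam ^ k / k.factorial * iteratedDeriv k (mittagLefflerR β) (-lam)

lemma fracPoissonWeight_nonneg (hlam : 0 ≤ lam) (hβ0 : 0 < β) (hβ1 : β ≤ 1) (k : ℕ) :
    0 ≤ fracPoissonWeight lam β k :=
  mul_nonneg (by positivity) (iteratedDeriv_mittagLefflerR_nonneg hβ0 hβ1 k _)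

lemma hasSum_fracPoissonWeight (lam : ℝ) (hβ : 0 < β) (u : ℂ) :
    HasSum (fun k => (fracPoissonWeight lam β k : ℂ) * u ^ k)
      (mittagLeffler β (lam * (u - 1))) := by
  have htaylor := Complex.hasSum_taylorSeries_of_entire (differentiable_mittagLeffler hβ)
    ((-lam : ℝ) : ℂ) (lam * (u - 1))
  refine htaylor.congr_fun fun k => ?_
  have hsub : (lam : ℂ) * (u - 1) - ((-lam : ℝ) : ℂ) = lam * u := by push_cast; ring
  rw [iteratedDeriv_mittagLeffler_ofReal hβ, fracPoissonWeight, hsub, smul_eq_mul, smul_eq_mul]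
  push_cast
  ring

lemma iteratedDeriv_mittagLeffler_comp_exp_zero (hlam : 0 ≤ lam) (hβ0 : 0 < β) (hβ1 : β ≤ 1)
    (n : ℕ) : iteratedDeriv n (fun z => mittagLeffler β (lam * (Complex.exp z - 1))) 0 =
      fpMoment lam β n :=
  iteratedDeriv_comp_exp_zero_eq_moment (fracPoissonWeight_nonneg hlam hβ0 hβ1)
    (hasSum_fracPoissonWeight lam hβ0) n

end FracPoisson

/-! ### Composition with `eᶻ - 1` -/

section Composition

variable {𝕜 : Type*} [NontriviallyNormedField 𝕜] [CompleteSpace 𝕜] [CharZero 𝕜]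
  {F u : 𝕜 → 𝕜}

lemma iteratedDeriv_pow_mul_eq_zero {G : 𝕜 → 𝕜} (hu : AnalyticAt 𝕜 u 0) (hu0 : u 0 = 0)
    (hG : AnalyticAt 𝕜 G 0) {k m : ℕ} (hkm : k < m) :
    iteratedDeriv k (fun z => u z ^ m * G z) 0 = 0 := by
  have horder : 1 ≤ analyticOrderAt u 0 := by
    rwa [Order.one_le_iff_ne_zero, hu.analyticOrderAt_ne_zero]
  refine (natCast_le_analyticOrderAt_iff_iteratedDeriv_eq_zero
    ((hu.pow m).mul hG)).1 ?_ k hkm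
  calc (m : ℕ∞) ≤ m * analyticOrderAt u 0 := le_mul_of_one_le_right' horder
    _ = analyticOrderAt (u ^ m) 0 := by rw [analyticOrderAt_pow hu, nsmul_eq_mul]
    _ ≤ analyticOrderAt (u ^ m * G) 0 := by
        rw [analyticOrderAt_mul (hu.pow m) hG]
        exact le_self_add

/-- In Taylor's formula for `F` to order `k`, the remainder becomes a multiple of `u ^ (k + 1)`,
whose `k`-th derivative vanishes at `0`. -/
lemma iteratedDeriv_comp_zero_eq_sum (hF : AnalyticAt 𝕜 F 0) (hu : AnalyticAt 𝕜 u 0)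
    (hu0 : u 0 = 0) (k : ℕ) :
    iteratedDeriv k (fun z => F (u z)) 0 = ∑ m ∈ range (k + 1),
      iteratedDeriv m F 0 / m.factorial * iteratedDeriv k (fun z => u z ^ m) 0 := by
  obtain ⟨G, hG, hFG⟩ := hF.exists_eventuallyEq_sum_add_pow_mul (k + 1)
  have hGu : AnalyticAt 𝕜 (fun z => G (u z)) 0 := .fun_comp (by rwa [hu0]) hu
  have htaylor : (fun z => F (u z)) =ᶠ[𝓝 0] fun z =>
      (∑ m ∈ range (k + 1), iteratedDeriv m F 0 / m.factorial * u z ^ m) +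
        u z ^ (k + 1) * G (u z) := by
    have hu_tendsto : Tendsto u (𝓝 0) (𝓝 0) := by simpa only [hu0] using hu.continuousAt.tendsto
    filter_upwards [hu_tendsto.eventually hFG] with z hz
    rw [hz, smul_eq_mul]
    congr 1
    exact sum_congr rfl fun m _ => by rw [smul_eq_mul, div_mul_comm]
  have hterm (m : ℕ) : ContDiffAt 𝕜 k
      (fun z => iteratedDeriv m F 0 / m.factorial * u z ^ m) 0 :=
    (analyticAt_const.mul (hu.pow m)).contDiffAt
  have hremainder : ContDiffAt 𝕜 k (fun z => u z ^ (k + 1) * G (u z)) 0 :=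
    ((hu.pow _).mul hGu).contDiffAt
  rw [htaylor.iteratedDeriv_eq, iteratedDeriv_fun_add (.sum fun m _ => hterm m) hremainder,
    iteratedDeriv_pow_mul_eq_zero hu hu0 hGu k.lt_succ_self, add_zero,
    iteratedDeriv_fun_sum fun m _ => hterm m]
  simp only [iteratedDeriv_const_mul_field]

end Composition

lemma iteratedDeriv_exp_sub_one_pow_zero (n k : ℕ) :
    iteratedDeriv n (fun z : ℂ => (Complex.exp z - 1) ^ k) 0 =
      k.factorial * (stirlingSnd n k : ℂ) := by
  have hreal := iteratedDeriv_ofReal_of_entire (f := fun z => (Complex.exp z - 1) ^ k)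
    (g := fun x => (Real.exp x - 1) ^ k) (by fun_prop) (by simp) n 0
  rw [Complex.ofReal_zero] at hreal
  rw [hreal, stirlingSnd, Complex.ofReal_div, Complex.ofReal_natCast,
    mul_div_cancel₀ _ (Nat.cast_ne_zero.2 k.factorial_ne_zero)]

lemma iteratedDeriv_comp_exp_sub_one_zero {F : ℂ → ℂ} (hF : AnalyticAt ℂ F 0) (k : ℕ) :
    iteratedDeriv k (fun z => F (Complex.exp z - 1)) 0 =
      ∑ m ∈ range (k + 1), iteratedDeriv m F 0 * (stirlingSnd k m : ℂ) := by
  rw [iteratedDeriv_comp_zero_eq_sum hF (by fun_prop) (by simp)]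
  refine sum_congr rfl fun m _ => ?_
  rw [iteratedDeriv_exp_sub_one_pow_zero, ← mul_assoc,
    div_mul_cancel₀ _ (Nat.cast_ne_zero.2 m.factorial_ne_zero)]

/-! ### Generalized Appell polynomials -/

/-- The generating function `e^{x log(1+z)} / E_β(λz) = ∑ C_n^{λ,β}(x) zⁿ/n!` of the generalized
Appell polynomials. -/
def genAppellGenFun (lam β : ℝ) (x z : ℂ) : ℂ :=
  Complex.exp (x * Complex.log (1 + z)) / mittagLeffler β (lam * z)

section GenAppell

variable {β : ℝ} (lam : ℝ) (x : ℂ)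

lemma analyticAt_genAppellGenFun (hβ : 0 < β) : AnalyticAt ℂ (genAppellGenFun lam β x) 0 := by
  have hlog : AnalyticAt ℂ (fun z : ℂ => Complex.log (1 + z)) 0 :=
    .clog (by fun_prop) (by simp)
  have hE : AnalyticAt ℂ (fun z : ℂ => mittagLeffler β (lam * z)) 0 :=
    ((differentiable_mittagLeffler hβ).comp (differentiable_id.const_mul _)).analyticAt 0
  exact (analyticAt_const.mul hlog).cexp.div hE (by simp [mittagLeffler_zero])

lemma genAppellGenFun_exp_sub_one_mul_eventuallyEq (hβ : 0 < β) :
    (fun z => genAppellGenFun lam β x (Complex.exp z - 1) *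
      mittagLeffler β (lam * (Complex.exp z - 1))) =ᶠ[𝓝 0] fun z => Complex.exp (x * z) := by
  have hne : ∀ᶠ z in 𝓝 (0 : ℂ), mittagLeffler β (lam * (Complex.exp z - 1)) ≠ 0 :=
    ((differentiable_mittagLeffler hβ).continuous.comp (by fun_prop)).continuousAt.eventually_ne
      (by simp [mittagLeffler_zero])
  have him : ∀ᶠ z in 𝓝 (0 : ℂ), |z.im| < Real.pi :=
    (Complex.continuous_im.abs.tendsto' 0 0 (by simp)).eventually (gt_mem_nhds Real.pi_pos)
  filter_upwards [hne, him] with z hz hzim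
  rw [genAppellGenFun, div_mul_cancel₀ _ hz, add_sub_cancel,
    Complex.log_exp (abs_lt.1 hzim).1 (abs_lt.1 hzim).2.le]

end GenAppell

theorem stmt5_general (lam β : ℝ) (hlam : 0 ≤ lam) (hβ0 : 0 < β) (hβ1 : β ≤ 1) (n : ℕ) (x : ℂ) :
    x ^ n =
      ∑ k ∈ Finset.range (n + 1), ∑ m ∈ Finset.range (k + 1),
        (n.choose k : ℂ) * genAppell lam β m x * (stirlingSnd k m : ℂ) *
          ((fpMoment lam β (n - k) : ℝ) : ℂ) := by
  have hF := analyticAt_genAppellGenFun lam x hβ0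
  have hFexp : AnalyticAt ℂ (fun z => genAppellGenFun lam β x (Complex.exp z - 1)) 0 :=
    .fun_comp (by simpa using hF) (by fun_prop)
  have hE : Differentiable ℂ fun z => mittagLeffler β (lam * (Complex.exp z - 1)) :=
    (differentiable_mittagLeffler hβ0).comp (by fun_prop)
  calc x ^ n = iteratedDeriv n (fun z => Complex.exp (x * z)) 0 := by
        simp [iteratedDeriv_cexp_const_mul]
    _ = iteratedDeriv n (fun z => genAppellGenFun lam β x (Complex.exp z - 1) *
          mittagLeffler β (lam * (Complex.exp z - 1))) 0 :=
        (genAppellGenFun_exp_sub_one_mul_eventuallyEq lam x hβ0).symm.iteratedDeriv_eq n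
    _ = ∑ k ∈ range (n + 1), n.choose k *
          (∑ m ∈ range (k + 1), genAppell lam β m x * (stirlingSnd k m : ℂ)) *
            (fpMoment lam β (n - k) : ℂ) := by
        simp only [iteratedDeriv_fun_mul hFexp.contDiffAt hE.contDiff.contDiffAt,
          iteratedDeriv_comp_exp_sub_one_zero hF,
          iteratedDeriv_mittagLeffler_comp_exp_zero hlam hβ0 hβ1]
        rfl
    _ = _ := by simp only [mul_sum, sum_mul, mul_assoc]

theorem stmt5 (lam β : ℝ) (hlam : 0 < lam) (hβ0 : 0 < β) (hβ1 : β ≤ 1) (n : ℕ) (x : ℝ) :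
    ((x : ℂ)) ^ n =
      ∑ k ∈ Finset.range (n + 1), ∑ m ∈ Finset.range (k + 1),
        (n.choose k : ℂ) * genAppell lam β m x * (stirlingSnd k m : ℂ) *
          ((fpMoment lam β (n - k) : ℝ) : ℂ) :=
  stmt5_general lam β hlam.le hβ0 hβ1 n x
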